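/- Let ω₁, ω₂ ∈ ℂ∖{0} and let φ̂₁(ζ) = 1/(ζ−ω₁), φ̂₂(ζ) = 1/(ζ−ω₂) (germs at 0). Then φ̂₁ and φ̂₂ belong to R̂_{{ω₁,ω₂}}, but φ̂₁ * φ̂₂ does not belong to R̂_{{ω₁,ω₂}}: there exists a path from 0 to ω₁+ω₂ avoiding ω₁ and ω₂ along which φ̂₁ * φ̂₂ admits no analytic continuation. Consequently, if Ω is a non-empty closed discrete subset of ℂ which is not stable under addition, then R̂_Ω is not stable under convolution. -/

import Mathlib

open Set Metric Filter Topology intervalIntegral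

noncomputable section

/-- A path `γ : [a,b] → ℂ` which is piecewise `C¹`. -/
def PiecewiseC1On (γ : ℝ → ℂ) (a b : ℝ) : Prop :=
  ContinuousOn γ (Set.Icc a b) ∧
  ∃ (n : ℕ) (u : ℕ → ℝ), u 0 = a ∧ u n = b ∧ (∀ i < n, u i ≤ u (i + 1)) ∧
    ∀ i < n, ContDiffOn ℝ 1 γ (Set.Icc (u i) (u (i + 1)))

/-- The germ at `γ a` of the function `f` admits analytic continuation along
`γ` restricted to `[a,b]`, resulting in the germ of `g` at `γ b`.  This is the
usual definition via a family of analytic elements `(F t, r t)` along the path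
which are locally compatible. -/
def ContAlong (f : ℂ → ℂ) (γ : ℝ → ℂ) (a b : ℝ) (g : ℂ → ℂ) : Prop :=
  ∃ (F : ℝ → ℂ → ℂ) (r : ℝ → ℝ),
    (∀ t ∈ Set.Icc a b, 0 < r t ∧ AnalyticOnNhd ℂ (F t) (Metric.ball (γ t) (r t))) ∧
    (∀ t ∈ Set.Icc a b, ∃ ε > 0, ∀ t' ∈ Set.Icc a b, |t' - t| < ε →
      Set.EqOn (F t) (F t') (Metric.ball (γ t) (r t) ∩ Metric.ball (γ t') (r t'))) ∧
    (∀ᶠ z in 𝓝 (γ a), F a z = f z) ∧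
    (∀ᶠ z in 𝓝 (γ b), F b z = g z)

/-- The germ of `f` at `γ a` admits analytic continuation along `γ|[a,b]`. -/
def ContinuableAlong (f : ℂ → ℂ) (γ : ℝ → ℂ) (a b : ℝ) : Prop :=
  ∃ g, ContAlong f γ a b g

/-- `f` is an `Ω`-continuable holomorphic germ at `0`: it is holomorphic on some
disc `D_R` with `D_R∖{0}` disjoint from `Ω`, and admits analytic continuation
along every (piecewise `C¹`) path of `ℂ∖Ω` originating from any point of `D_R∖{0}`. -/
def OmegaCont (Ω : Set ℂ) (f : ℂ → ℂ) : Prop :=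
  ∃ R > 0, AnalyticOnNhd ℂ f (Metric.ball 0 R) ∧
    (∀ ζ ∈ Metric.ball (0:ℂ) R, ζ ≠ 0 → ζ ∉ Ω) ∧
    ∀ γ : ℝ → ℂ, PiecewiseC1On γ 0 1 → γ 0 ∈ Metric.ball (0:ℂ) R → γ 0 ≠ 0 →
      (∀ t ∈ Set.Icc (0:ℝ) 1, γ t ∉ Ω) → ContinuableAlong f γ 0 1

/-- Convolution of two germs: `(f ⋆ g)(ζ) = ∫₀^ζ f(ξ) g(ζ-ξ) dξ`, the integral
being taken over the line segment from `0` to `ζ`. -/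
def conv (f g : ℂ → ℂ) (ζ : ℂ) : ℂ :=
  ζ * ∫ t in (0:ℝ)..1, f ((t : ℂ) * ζ) * g ((1 - (t : ℂ)) * ζ)

/-!
Put `f = φ̂₁ * φ̂₂`. Partial fractions show that `(ζ - ω₁ - ω₂) f(ζ)` is, near `0`, a primitive of
`h(ζ) = 1/(ζ - ω₁) + 1/(ζ - ω₂)`. Continuing `f` analytically along a path `γ` from a point `s` near
`0` to `ω₁ + ω₂` continues this primitive as well, and the factor `ζ - ω₁ - ω₂` forces it to vanish
at the end point. So `∫_γ h dζ = -(s - ω₁ - ω₂) f(s)`, whatever the path. But inserting a small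
circle around `ω₁` into `γ` changes the integral by a nonzero multiple of `2πi`; hence `f` cannot be
continued along both paths.
-/

section PiecewiseC1

lemma monotoneOn_Iic_of_le_add_one {α : Type*} [Preorder α] {u : ℕ → α} {n : ℕ}
    (h : ∀ i < n, u i ≤ u (i + 1)) : MonotoneOn u (Iic n) :=
  monotoneOn_of_le_succ ordConnected_Iic fun i _ _ hi => h i hi

lemma PiecewiseC1On.of_contDiffOn {γ : ℝ → ℂ} {a b : ℝ} (hab : a ≤ b)
    (hγ : ContDiffOn ℝ 1 γ (Icc a b)) : PiecewiseC1On γ a b :=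
  ⟨hγ.continuousOn, 1, fun i => if i = 0 then a else b, by simp, by simp, by simpa, by simpa⟩

lemma PiecewiseC1On.le {γ : ℝ → ℂ} {a b : ℝ} (hγ : PiecewiseC1On γ a b) : a ≤ b := by
  obtain ⟨-, n, u, rfl, rfl, hmono, -⟩ := hγ
  exact monotoneOn_Iic_of_le_add_one hmono (Nat.zero_le n) self_mem_Iic (Nat.zero_le n)

lemma PiecewiseC1On.comp_mul_add {γ : ℝ → ℂ} {a b c d : ℝ} (hc : 0 < c)
    (hγ : PiecewiseC1On γ (c * a + d) (c * b + d)) :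
    PiecewiseC1On (fun t => γ (c * t + d)) a b := by
  obtain ⟨hcont, n, u, h0, hn, hmono, hC1⟩ := hγ
  have mapsTo_pullback (p q : ℝ) :
      MapsTo (fun t => c * t + d) (Icc ((p - d) / c) ((q - d) / c)) (Icc p q) := fun t ht => by
    rw [mem_Icc, div_le_iff₀ hc, le_div_iff₀ hc] at ht
    constructor <;> linarith
  refine ⟨hcont.comp (by fun_prop) fun t ht => ?_, n, fun i => (u i - d) / c, ?_, ?_,
    fun i hi => ?_, fun i hi => (hC1 i hi).comp (by fun_prop) (mapsTo_pullback _ _)⟩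
  · exact ⟨by gcongr; exact ht.1, by gcongr; exact ht.2⟩
  · simp [h0, hc.ne']
  · simp [hn, hc.ne']
  · have := hmono i hi
    dsimp only
    gcongr

lemma PiecewiseC1On.congr {γ δ : ℝ → ℂ} {a b : ℝ} (hγ : PiecewiseC1On γ a b)
    (h : EqOn δ γ (Icc a b)) : PiecewiseC1On δ a b := by
  obtain ⟨hcont, n, u, rfl, rfl, hmono, hC1⟩ := hγ
  have hu : MonotoneOn u (Iic n) := monotoneOn_Iic_of_le_add_one hmono
  exact ⟨hcont.congr h, n, u, rfl, rfl, hmono, fun i hi => (hC1 i hi).congr <| h.mono <|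
    Icc_subset_Icc (hu (Nat.zero_le n) hi.le (Nat.zero_le i)) (hu hi self_mem_Iic hi)⟩

lemma PiecewiseC1On.trans {γ : ℝ → ℂ} {a b c : ℝ}
    (h₁ : PiecewiseC1On γ a b) (h₂ : PiecewiseC1On γ b c) : PiecewiseC1On γ a c := by
  have hcont : ContinuousOn γ (Icc a c) := by
    rw [← Icc_union_Icc_eq_Icc h₁.le h₂.le]
    exact h₁.1.union_of_isClosed h₂.1 isClosed_Icc isClosed_Icc
  obtain ⟨-, n, u, rfl, rfl, hmono₁, hC1₁⟩ := h₁
  obtain ⟨-, m, v, hv, rfl, hmono₂, hC1₂⟩ := h₂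
  let w : ℕ → ℝ := fun i => if i ≤ n then u i else v (i - n)
  have w_of_le {i : ℕ} (hi : i ≤ n) : w i = u i := if_pos hi
  have w_add (j : ℕ) : w (n + j) = v j := by
    cases j with
    | zero => simp [w, hv]
    | succ j => simp [w]
  have forall_pieces {p : ℝ → ℝ → Prop} (hu : ∀ i < n, p (u i) (u (i + 1)))
      (hv : ∀ j < m, p (v j) (v (j + 1))) : ∀ i < n + m, p (w i) (w (i + 1)) := fun i hi => by
    rcases lt_or_ge i n with hin | hni
    · rw [w_of_le hin.le, w_of_le hin]
      exact hu i hin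
    · obtain ⟨j, rfl⟩ := Nat.exists_eq_add_of_le hni
      rw [w_add, add_assoc, w_add]
      exact hv j (by lia)
  exact ⟨hcont, n + m, w, w_of_le (Nat.zero_le n), w_add m, forall_pieces hmono₁ hmono₂,
    forall_pieces (p := fun s t => ContDiffOn ℝ 1 γ (Icc s t)) hC1₁ hC1₂⟩

lemma PiecewiseC1On.pathTrans {x y z : ℂ} {γ₁ : Path x y} {γ₂ : Path y z}
    (h₁ : PiecewiseC1On γ₁.extend 0 1) (h₂ : PiecewiseC1On γ₂.extend 0 1) :
    PiecewiseC1On (γ₁.trans γ₂).extend 0 1 := by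
  have hleft : PiecewiseC1On (fun t => γ₁.extend (2 * t + 0)) 0 (1 / 2) :=
    .comp_mul_add two_pos (by simpa using h₁)
  have hright : PiecewiseC1On (fun t => γ₂.extend (2 * t + -1)) (1 / 2) 1 :=
    .comp_mul_add two_pos (by norm_num [h₂])
  refine .trans (hleft.congr fun t ht => ?_) (hright.congr fun t ht => ?_)
  · simp only [γ₁.extend_trans_of_le_half γ₂ ht.2, add_zero]
  · simp only [γ₁.extend_trans_of_half_le γ₂ ht.1, sub_eq_add_neg]

end PiecewiseC1

section CurveIntegral

variable {F : Type*} [NormedAddCommGroup F] [NormedSpace ℂ F] {x y : ℂ} {γ : Path x y}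
  {ω : ℂ → ℂ →L[ℂ] F}

lemma continuousOn_toSpanSingleton {X : Type*} [TopologicalSpace X] {h : X → F} {s : Set X}
    (hh : ContinuousOn h s) :
    ContinuousOn (fun z => ContinuousLinearMap.toSpanSingleton ℂ (h z)) s :=
  ContinuousLinearMap.toSpanSingletonCLE.continuous.comp_continuousOn hh

lemma curveIntegralFun_of_hasDerivAt {t : ℝ} (ht : t ∈ Ioo (0 : ℝ) 1) {v : ℂ}
    (hγ : HasDerivAt γ.extend v t) : curveIntegralFun ω γ t = ω (γ.extend t) v := by
  rw [curveIntegralFun_def, derivWithin_of_mem_nhds (Icc_mem_nhds ht.1 ht.2), hγ.deriv]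

lemma intervalIntegrable_curveIntegralFun {a b : ℝ} (h0 : 0 ≤ a) (hab : a ≤ b) (h1 : b ≤ 1)
    (hγ : ContDiffOn ℝ 1 γ.extend (Icc a b)) (hω : ContinuousOn ω (range γ)) :
    IntervalIntegrable (curveIntegralFun ω γ) MeasureTheory.volume a b := by
  rcases hab.eq_or_lt with rfl | hlt
  · exact .refl
  let _ : NormedSpace ℝ F := .restrictScalars ℝ ℂ F
  have hcont : ContinuousOn (fun t => ω (γ.extend t) (derivWithin γ.extend (Icc a b) t))
      (Icc a b) :=
    (hω.comp (by fun_prop) fun t _ => γ.extend_range ▸ mem_range_self t).clm_apply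
      (hγ.continuousOn_derivWithin (uniqueDiffOn_Icc hlt) le_rfl)
  refine (hcont.intervalIntegrable_of_Icc hab).congr_uIoo fun t ht => ?_
  rw [uIoo_of_le hab] at ht
  have hnhds : Icc a b ∈ 𝓝 t := Icc_mem_nhds ht.1 ht.2
  refine (curveIntegralFun_of_hasDerivAt ⟨h0.trans_lt ht.1, ht.2.trans_le h1⟩ ?_).symm
  rw [derivWithin_of_mem_nhds hnhds]
  exact ((hγ.differentiableOn one_ne_zero).differentiableAt hnhds).hasDerivAt

lemma PiecewiseC1On.curveIntegral_eq_sub [CompleteSpace F] [NormedSpace ℝ F] {G : ℝ → F}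
    (hγ : PiecewiseC1On γ.extend 0 1) (hω : ContinuousOn ω (range γ))
    (hG : ContinuousOn G (Icc 0 1))
    (hderiv : ∀ t ∈ Ioo (0 : ℝ) 1, ∀ v, HasDerivAt γ.extend v t →
      HasDerivAt G (ω (γ.extend t) v) t) :
    ∫ᶜ z in γ, ω z = G 1 - G 0 := by
  obtain ⟨-, n, u, h0, hn, hmono, hC1⟩ := hγ
  have hu : MonotoneOn u (Iic n) := monotoneOn_Iic_of_le_add_one hmono
  have hnonneg {i : ℕ} (hi : i ≤ n) : 0 ≤ u i := h0 ▸ hu (Nat.zero_le n) hi (Nat.zero_le i)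
  have hle_one {i : ℕ} (hi : i ≤ n) : u i ≤ 1 := hn ▸ hu hi self_mem_Iic hi
  have hint (i : ℕ) (hi : i < n) :
      IntervalIntegrable (curveIntegralFun ω γ) MeasureTheory.volume (u i) (u (i + 1)) :=
    intervalIntegrable_curveIntegralFun (hnonneg hi.le) (hmono i hi) (hle_one hi) (hC1 i hi) hω
  have hpiece (i : ℕ) (hi : i < n) :
      ∫ t in (u i)..(u (i + 1)), curveIntegralFun ω γ t = G (u (i + 1)) - G (u i) := by
    refine integral_eq_sub_of_hasDerivAt_of_le (hmono i hi)
      (hG.mono (Icc_subset_Icc (hnonneg hi.le) (hle_one hi))) (fun t ht => ?_) (hint i hi)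
    have ht01 : t ∈ Ioo (0 : ℝ) 1 :=
      ⟨(hnonneg hi.le).trans_lt ht.1, ht.2.trans_le (hle_one hi)⟩
    have hdiff : HasDerivAt γ.extend (deriv γ.extend t) t :=
      (((hC1 i hi).differentiableOn one_ne_zero).differentiableAt
        (Icc_mem_nhds ht.1 ht.2)).hasDerivAt
    rw [curveIntegralFun_of_hasDerivAt ht01 hdiff]
    exact hderiv t ht01 _ hdiff
  calc ∫ᶜ z in γ, ω z = ∫ t in (u 0)..(u n), curveIntegralFun ω γ t := by
        rw [curveIntegral_def, h0, hn]
    _ = ∑ i ∈ Finset.range n, ∫ t in (u i)..(u (i + 1)), curveIntegralFun ω γ t :=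
        (sum_integral_adjacent_intervals hint).symm
    _ = ∑ i ∈ Finset.range n, (G (u (i + 1)) - G (u i)) :=
        Finset.sum_congr rfl fun i hi => hpiece i (Finset.mem_range.mp hi)
    _ = G 1 - G 0 := by rw [Finset.sum_range_sub (fun i => G (u i)), h0, hn]

end CurveIntegral

section AnalyticContinuation

/-- A family of analytic elements along `γ` on `[a, b]`: the function `F t` is analytic on the disc
of radius `r t` around `γ t`, and elements at nearby parameters agree where both are defined.
These are the families that witness `ContAlong`. -/
structure AnalyticChain (F : ℝ → ℂ → ℂ) (r : ℝ → ℝ) (γ : ℝ → ℂ) (a b : ℝ) : Prop where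
  radius_pos : ∀ t ∈ Icc a b, 0 < r t
  analyticOnNhd : ∀ t ∈ Icc a b, AnalyticOnNhd ℂ (F t) (ball (γ t) (r t))
  compatible : ∀ t ∈ Icc a b, ∃ ε > 0, ∀ t' ∈ Icc a b, |t' - t| < ε →
    EqOn (F t) (F t') (ball (γ t) (r t) ∩ ball (γ t') (r t'))

lemma continuableAlong_iff_exists_analyticChain {f : ℂ → ℂ} {γ : ℝ → ℂ} {a b : ℝ} :
    ContinuableAlong f γ a b ↔ ∃ F r, AnalyticChain F r γ a b ∧ F a =ᶠ[𝓝 (γ a)] f := by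
  constructor
  · rintro ⟨g, F, r, hF, hcomp, ha, -⟩
    exact ⟨F, r, ⟨fun t ht => (hF t ht).1, fun t ht => (hF t ht).2, hcomp⟩, ha⟩
  · rintro ⟨F, r, hF, ha⟩
    exact ⟨F b, F, r, fun t ht => ⟨hF.radius_pos t ht, hF.analyticOnNhd t ht⟩, hF.compatible, ha,
      EventuallyEq.rfl⟩

namespace AnalyticChain

variable {F G : ℝ → ℂ → ℂ} {r s : ℝ → ℝ} {γ : ℝ → ℂ} {a b t : ℝ}

lemma exists_const {h : ℂ → ℂ} (hh : ∀ t ∈ Icc a b, AnalyticAt ℂ h (γ t)) :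
    ∃ r, AnalyticChain (fun _ => h) r γ a b := by
  choose! r hr using fun t ht => (hh t ht).exists_ball_analyticOnNhd
  exact ⟨r, fun t ht => (hr t ht).1, fun t ht => (hr t ht).2,
    fun t _ => ⟨1, one_pos, fun _ _ _ _ _ => rfl⟩⟩

lemma mul_left (hF : AnalyticChain F r γ a b) {q : ℂ → ℂ} (hq : Differentiable ℂ q) :
    AnalyticChain (fun t => q * F t) r γ a b where
  radius_pos := hF.radius_pos
  analyticOnNhd t ht := fun z hz => (hq.analyticAt z).mul (hF.analyticOnNhd t ht z hz)
  compatible t ht := by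
    obtain ⟨ε, hε, h⟩ := hF.compatible t ht
    exact ⟨ε, hε, fun t' ht' htt' z hz => congrArg (q z * ·) (h t' ht' htt' hz)⟩

lemma deriv (hF : AnalyticChain F r γ a b) : AnalyticChain (fun t => deriv (F t)) r γ a b where
  radius_pos := hF.radius_pos
  analyticOnNhd t ht := (hF.analyticOnNhd t ht).deriv
  compatible t ht := by
    obtain ⟨ε, hε, h⟩ := hF.compatible t ht
    exact ⟨ε, hε, fun t' ht' htt' => (h t' ht' htt').deriv (isOpen_ball.inter isOpen_ball)⟩

lemma analyticAt (hF : AnalyticChain F r γ a b) (ht : t ∈ Icc a b) : AnalyticAt ℂ (F t) (γ t) :=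
  hF.analyticOnNhd t ht _ (mem_ball_self (hF.radius_pos t ht))

lemma eventually_mem_ball (hF : AnalyticChain F r γ a b) (hγ : ContinuousOn γ (Icc a b))
    (ht : t ∈ Icc a b) : ∀ᶠ t' in 𝓝[Icc a b] t, γ t' ∈ ball (γ t) (r t) :=
  hγ t ht (ball_mem_nhds _ (hF.radius_pos t ht))

lemma eventually_eventuallyEq (hF : AnalyticChain F r γ a b) (hγ : ContinuousOn γ (Icc a b))
    (ht : t ∈ Icc a b) : ∀ᶠ t' in 𝓝[Icc a b] t, F t' =ᶠ[𝓝 (γ t')] F t := by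
  obtain ⟨ε, hε, hcomp⟩ := hF.compatible t ht
  filter_upwards [hF.eventually_mem_ball hγ ht, self_mem_nhdsWithin,
    mem_nhdsWithin_of_mem_nhds (ball_mem_nhds t hε)] with t' hmem ht' hdist
  refine (hcomp t' ht' hdist).symm.eventuallyEq_of_mem ?_
  exact (isOpen_ball.inter isOpen_ball).mem_nhds ⟨hmem, mem_ball_self (hF.radius_pos t' ht')⟩

lemma eventuallyEq_of_left (hF : AnalyticChain F r γ a b) (hG : AnalyticChain G s γ a b)
    (hγ : ContinuousOn γ (Icc a b)) (h : F a =ᶠ[𝓝 (γ a)] G a) (ht : t ∈ Icc a b) :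
    F t =ᶠ[𝓝 (γ t)] G t := by
  refine (isPreconnected_Icc.induction₂ (s := Icc a b)
    (fun t t' => F t =ᶠ[𝓝 (γ t)] G t ↔ F t' =ᶠ[𝓝 (γ t')] G t') (fun t ht => ?_)
    (fun _ _ _ _ _ _ => Iff.trans) (fun _ _ _ _ => Iff.symm)
    (left_mem_Icc.mpr (ht.1.trans ht.2)) ht).mp h
  have propagate {z w : ℂ} (hz : z ∈ ball (γ t) (min (r t) (s t)))
      (hw : w ∈ ball (γ t) (min (r t) (s t))) (hzFG : F t =ᶠ[𝓝 z] G t) : F t =ᶠ[𝓝 w] G t :=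
    ((hF.analyticOnNhd t ht).mono (ball_subset_ball (min_le_left _ _))
      |>.eqOn_of_preconnected_of_eventuallyEq
        ((hG.analyticOnNhd t ht).mono (ball_subset_ball (min_le_right _ _)))
        (convex_ball _ _).isPreconnected hz hzFG).eventuallyEq_of_mem (isOpen_ball.mem_nhds hw)
  have hself : γ t ∈ ball (γ t) (min (r t) (s t)) :=
    mem_ball_self (lt_min (hF.radius_pos t ht) (hG.radius_pos t ht))
  filter_upwards [hF.eventually_eventuallyEq hγ ht, hG.eventually_eventuallyEq hγ ht,
    hγ t ht (isOpen_ball.mem_nhds hself)] with t' hFt' hGt' hmem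
  exact ⟨fun h => hFt'.trans ((propagate hself hmem h).trans hGt'.symm),
    fun h => propagate hmem hself (hFt'.symm.trans (h.trans hGt'))⟩

lemma eventually_apply_eq (hF : AnalyticChain F r γ a b) (hγ : ContinuousOn γ (Icc a b))
    (ht : t ∈ Icc a b) : (fun t' => F t' (γ t')) =ᶠ[𝓝[Icc a b] t] F t ∘ γ :=
  (hF.eventually_eventuallyEq hγ ht).mono fun _ h => h.self_of_nhds

lemma continuousOn_apply (hF : AnalyticChain F r γ a b) (hγ : ContinuousOn γ (Icc a b)) :
    ContinuousOn (fun t => F t (γ t)) (Icc a b) := fun t ht =>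
  ((hF.analyticAt ht).continuousAt.comp_continuousWithinAt (hγ t ht)).congr_of_eventuallyEq_of_mem
    (hF.eventually_apply_eq hγ ht) ht

lemma hasDerivAt_apply (hF : AnalyticChain F r γ a b) (hγ : ContinuousOn γ (Icc a b))
    (ht : t ∈ Ioo a b) {v : ℂ} (hv : HasDerivAt γ v t) :
    HasDerivAt (fun t => F t (γ t)) (_root_.deriv (F t) (γ t) * v) t := by
  have ht' : t ∈ Icc a b := Ioo_subset_Icc_self ht
  have hnear := hF.eventually_apply_eq hγ ht'
  rw [nhdsWithin_eq_nhds.mpr (Icc_mem_nhds ht.1 ht.2)] at hnear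
  exact ((hF.analyticAt ht').differentiableAt.hasDerivAt.comp t hv).congr_of_eventuallyEq hnear

lemma curveIntegral_eq_sub {x y : ℂ} {γ : Path x y} {h : ℂ → ℂ}
    (hF : AnalyticChain F r γ.extend 0 1) (hγ : PiecewiseC1On γ.extend 0 1)
    (hcont : ContinuousOn h (range γ))
    (hderiv : ∀ t ∈ Icc (0 : ℝ) 1, _root_.deriv (F t) (γ.extend t) = h (γ.extend t)) :
    ∫ᶜ z in γ, .toSpanSingleton ℂ (h z) = F 1 y - F 0 x := by
  have hprim := hγ.curveIntegral_eq_sub (ω := fun z => .toSpanSingleton ℂ (h z))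
    (continuousOn_toSpanSingleton hcont) (hF.continuousOn_apply hγ.1) fun t ht v hv => by
      rw [ContinuousLinearMap.toSpanSingleton_apply, smul_eq_mul, mul_comm,
        ← hderiv t (Ioo_subset_Icc_self ht)]
      exact hF.hasDerivAt_apply hγ.1 ht hv
  simpa using hprim

end AnalyticChain

theorem ContinuableAlong.curveIntegral_eq {f q h : ℂ → ℂ} {x y : ℂ} {γ : Path x y}
    (hf : ContinuableAlong f γ.extend 0 1) (hγ : PiecewiseC1On γ.extend 0 1)
    (hq : Differentiable ℂ q) (hqy : q y = 0) (hh : AnalyticOnNhd ℂ h (range γ))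
    (hderiv : deriv (q * f) =ᶠ[𝓝 x] h) :
    ∫ᶜ z in γ, .toSpanSingleton ℂ (h z) = -(q x * f x) := by
  obtain ⟨F, r, hF, hFf⟩ := continuableAlong_iff_exists_analyticChain.mp hf
  rw [γ.extend_zero] at hFf
  have hγ_mem (t : ℝ) : γ.extend t ∈ range γ := γ.extend_range ▸ mem_range_self t
  obtain ⟨s, hconst⟩ := AnalyticChain.exists_const fun t (_ : t ∈ Icc 0 1) => hh _ (hγ_mem t)
  have hqF := hF.mul_left hq
  have hqF_deriv : ∀ t ∈ Icc (0 : ℝ) 1, deriv (q * F t) (γ.extend t) = h (γ.extend t) :=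
    fun t ht => (hqF.deriv.eventuallyEq_of_left hconst hγ.1 (by
      rw [γ.extend_zero]
      exact (EventuallyEq.rfl.mul hFf).deriv.trans hderiv) ht).self_of_nhds
  rw [hqF.curveIntegral_eq_sub hγ hh.continuousOn hqF_deriv]
  simp [hqy, hFf.self_of_nhds]

end AnalyticContinuation

section Arcs

variable {E : Type*} [NormedAddCommGroup E] [NormedSpace ℝ E]

/-- The parabolic arc from `p` to `q` that departs from the segment `[p, q]` in the direction `v`,
used to join two points in uncountably many ways by arcs that are disjoint except at the ends. -/
def parabolicArc (p q v : E) : Path p q where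
  toFun t := AffineMap.lineMap p q (t : ℝ) + ((t : ℝ) * (1 - t)) • v
  source' := by simp
  target' := by simp

lemma contDiffOn_parabolicArc_extend (p q v : E) {n : ℕ∞} :
    ContDiffOn ℝ n (parabolicArc p q v).extend (Icc 0 1) := by
  have hsmooth : ContDiff ℝ n fun t : ℝ => AffineMap.lineMap p q t + (t * (1 - t)) • v := by
    simp only [AffineMap.lineMap_apply_module']
    fun_prop
  exact hsmooth.contDiffOn.congr fun t ht => Path.extend_apply _ ht

lemma eq_of_parabolicArc_apply_eq {p q v : E} (hv : LinearIndependent ℝ ![q - p, v]) {x y : ℝ}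
    {s t : unitInterval} (h : parabolicArc p q (x • v) s = parabolicArc p q (y • v) t)
    (hp : parabolicArc p q (x • v) s ≠ p) (hq : parabolicArc p q (x • v) s ≠ q) : x = y := by
  have hcomb : ((s : ℝ) - t) • (q - p) + (s * (1 - s) * x - t * (1 - t) * y : ℝ) • v = 0 := by
    simp only [parabolicArc, Path.coe_mk_mk, AffineMap.lineMap_apply_module'] at h
    rw [← sub_eq_zero.mpr h]
    module
  obtain ⟨hst, hxy⟩ := LinearIndependent.pair_iff.mp hv _ _ hcomb
  obtain rfl : s = t := Subtype.ext (sub_eq_zero.mp hst)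
  have hs0 : (s : ℝ) ≠ 0 := fun hs => hp (by simp [show s = 0 from Subtype.ext hs])
  have hs1 : (1 - s : ℝ) ≠ 0 := fun hs =>
    hq (by simp [show s = 1 from Subtype.ext (sub_eq_zero.mp hs).symm])
  rw [← mul_sub] at hxy
  exact sub_eq_zero.mp ((mul_eq_zero_iff_left (mul_ne_zero hs0 hs1)).mp hxy)

lemma exists_path_contDiffOn_avoiding_countable (hE : 1 < Module.rank ℝ E) {Ω : Set E}
    (hΩ : Ω.Countable) {p q : E} (hp : p ∉ Ω) (hq : q ∉ Ω) {n : ℕ∞} :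
    ∃ γ : Path p q, ContDiffOn ℝ n γ.extend (Icc 0 1) ∧ range γ ⊆ Ωᶜ := by
  rcases eq_or_ne p q with rfl | hpq
  · exact ⟨.refl p, by simpa using! contDiffOn_const, by simpa⟩
  obtain ⟨v, hv⟩ := exists_linearIndependent_pair_of_one_lt_rank hE (sub_ne_zero.mpr hpq.symm)
  have hcount : {x : ℝ | ∃ ω ∈ Ω, ∃ t, parabolicArc p q (x • v) t = ω}.Countable := by
    refine (hΩ.biUnion (t := fun ω _ => {x | ∃ t, parabolicArc p q (x • v) t = ω}) fun ω hω =>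
      Set.Subsingleton.countable ?_).mono fun x ⟨ω, hω, hx⟩ => mem_biUnion hω hx
    rintro x ⟨s, hs⟩ y ⟨t, ht⟩
    exact eq_of_parabolicArc_apply_eq hv (hs.trans ht.symm) (fun h => hp (by rwa [← h, hs]))
      fun h => hq (by rwa [← h, hs])
  obtain ⟨x, hx⟩ := (hcount.dense_compl ℝ).nonempty
  exact ⟨parabolicArc p q (x • v), contDiffOn_parabolicArc_extend p q _,
    range_subset_iff.mpr fun t ht => hx ⟨_, ht, t, rfl⟩⟩

end Arcs

section Circles

open scoped Real

/-- The circle of centre `c` and radius `R`, run once counterclockwise from `c + R`, as a `Path`, so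
that it can be inserted between two other paths. -/
def circlePath (c : ℂ) (R : ℝ) : Path (c + R) (c + R) where
  toFun t := circleMap c R (2 * π * t)
  source' := by simp [circleMap]
  target' := by simp [circleMap]

lemma extend_circlePath {c : ℂ} {R : ℝ} :
    EqOn (circlePath c R).extend (fun t => circleMap c R (2 * π * t)) (Icc 0 1) :=
  fun _ ht => Path.extend_apply _ ht

lemma contDiffOn_circlePath_extend (c : ℂ) (R : ℝ) {n : ℕ∞} :
    ContDiffOn ℝ n (circlePath c R).extend (Icc 0 1) :=
  ((contDiff_circleMap c R).comp (contDiff_const.mul contDiff_id)).contDiffOn.congr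
    extend_circlePath

lemma range_circlePath_subset_sphere (c : ℂ) {R : ℝ} (hR : 0 ≤ R) :
    range (circlePath c R) ⊆ sphere c R :=
  range_subset_iff.mpr fun _ => circleMap_mem_sphere c hR _

lemma curveIntegral_circlePath {F : Type*} [NormedAddCommGroup F] [NormedSpace ℂ F] (h : ℂ → F)
    (c : ℂ) (R : ℝ) :
    ∫ᶜ z in circlePath c R, .toSpanSingleton ℂ (h z) = ∮ z in C(c, R), h z := by
  have hderiv (t : ℝ) : HasDerivAt (fun t => circleMap c R (2 * π * t))
      ((2 * π : ℝ) • deriv (circleMap c R) (2 * π * t)) t := by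
    simpa using! (hasDerivAt_circleMap c R (2 * π * t)).scomp t
      ((hasDerivAt_id t).const_mul (2 * π))
  calc ∫ᶜ z in circlePath c R, .toSpanSingleton ℂ (h z)
      = ∫ t in (0 : ℝ)..1, (2 * π) •
          (deriv (circleMap c R) (2 * π * t) • h (circleMap c R (2 * π * t))) := by
        rw [curveIntegral_def]
        refine intervalIntegral.integral_congr fun t ht => ?_
        rw [uIcc_of_le zero_le_one] at ht
        rw [curveIntegralFun_def, derivWithin_congr extend_circlePath (extend_circlePath ht),
          (hderiv t).hasDerivWithinAt.derivWithin (uniqueDiffOn_Icc zero_lt_one t ht),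
          extend_circlePath ht]
        exact smul_assoc (2 * π) _ _
    _ = ∮ z in C(c, R), h z := by
        rw [intervalIntegral.integral_smul, smul_integral_comp_mul_left
          (fun θ => deriv (circleMap c R) θ • h (circleMap c R θ)) (2 * π), mul_zero, mul_one,
          circleIntegral]

lemma circleIntegral_sub_inv_of_notMem_closedBall {c w : ℂ} {R : ℝ} (hR : 0 ≤ R)
    (hw : w ∉ closedBall c R) : ∮ z in C(c, R), (z - w)⁻¹ = 0 := by
  refine DiffContOnCl.circleIntegral_eq_zero hR (DifferentiableOn.diffContOnCl fun z hz => ?_)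
  have hzw : z - w ≠ 0 := sub_ne_zero.mpr <| ne_of_mem_of_not_mem
    (closure_ball_subset_closedBall hz) hw
  fun_prop (disch := exact hzw)

lemma circleIntegral_sub_center_inv_add_sub_inv_ne_zero {a b : ℂ} {R : ℝ} (hR : 0 < R)
    (hb : b = a ∨ b ∉ closedBall a R) : ∮ z in C(a, R), ((z - a)⁻¹ + (z - b)⁻¹) ≠ 0 := by
  have hint {w : ℂ} (hw : w ∉ sphere a R) : CircleIntegrable (fun z => (z - w)⁻¹) a R :=
    circleIntegrable_sub_inv_iff.mpr (.inr (by rwa [abs_of_pos hR]))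
  have ha : a ∉ sphere a R := by simp [hR.ne]
  have hb' : b ∉ sphere a R := by
    rcases hb with rfl | hb
    exacts [ha, fun h => hb (sphere_subset_closedBall h)]
  rw [circleIntegral.integral_add (hint ha) (hint hb'),
    circleIntegral.integral_sub_center_inv a hR.ne']
  rcases hb with rfl | hb
  · rw [circleIntegral.integral_sub_center_inv b hR.ne', ← two_mul]
    exact mul_ne_zero two_ne_zero Complex.two_pi_I_ne_zero
  · rw [circleIntegral_sub_inv_of_notMem_closedBall hR.le hb, add_zero]
    exact Complex.two_pi_I_ne_zero

end Circles

theorem exists_path_not_continuableAlong {Ω : Set ℂ} (hΩ : Ω.Countable) {f q h : ℂ → ℂ}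
    {s ω c : ℂ} {R : ℝ} (hs : s ∉ Ω) (hω : ω ∉ Ω) (hq : Differentiable ℂ q) (hqω : q ω = 0)
    (hh : AnalyticOnNhd ℂ h Ωᶜ) (hderiv : deriv (q * f) =ᶠ[𝓝 s] h) (hR : 0 ≤ R)
    (hsphere : sphere c R ⊆ Ωᶜ) (hperiod : ∮ z in C(c, R), h z ≠ 0) :
    ∃ γ : Path s ω, PiecewiseC1On γ.extend 0 1 ∧ range γ ⊆ Ωᶜ ∧
      ¬ ContinuableAlong f γ.extend 0 1 := by
  by_contra! hcont
  have hint (γ : Path s ω) (hγ : PiecewiseC1On γ.extend 0 1) (hγΩ : range γ ⊆ Ωᶜ) :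
      ∫ᶜ z in γ, .toSpanSingleton ℂ (h z) = -(q s * f s) :=
    (hcont γ hγ hγΩ).curveIntegral_eq hγ hq hqω (hh.mono hγΩ) hderiv
  have hintegrable {x y : ℂ} {γ : Path x y} (hγ : ContDiffOn ℝ 1 γ.extend (Icc 0 1))
      (hγΩ : range γ ⊆ Ωᶜ) :
      CurveIntegrable (fun z => ContinuousLinearMap.toSpanSingleton ℂ (h z)) γ :=
    (continuousOn_toSpanSingleton hh.continuousOn).curveIntegrable_of_contDiffOn hγ
      (range_subset_iff.mp hγΩ)
  have hrank : 1 < Module.rank ℝ ℂ := Complex.rank_real_complex ▸ Nat.one_lt_ofNat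
  have hbase : c + R ∉ Ω := hsphere (by simp [abs_of_nonneg hR])
  obtain ⟨P, hP, hPΩ⟩ := exists_path_contDiffOn_avoiding_countable hrank hΩ hs hbase (n := 1)
  obtain ⟨Q, hQ, hQΩ⟩ := exists_path_contDiffOn_avoiding_countable hrank hΩ hbase hω (n := 1)
  have hC : ContDiffOn ℝ 1 (circlePath c R).extend (Icc 0 1) := contDiffOn_circlePath_extend c R
  have hCΩ : range (circlePath c R) ⊆ Ωᶜ := (range_circlePath_subset_sphere c hR).trans hsphere
  have hpw {x y : ℂ} {γ : Path x y} (hγ : ContDiffOn ℝ 1 γ.extend (Icc 0 1)) :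
      PiecewiseC1On γ.extend 0 1 := .of_contDiffOn zero_le_one hγ
  have hPQ := hint (P.trans Q) ((hpw hP).pathTrans (hpw hQ))
    (by simpa only [Path.trans_range] using union_subset hPΩ hQΩ)
  have hPCQ := hint ((P.trans (circlePath c R)).trans Q)
    (((hpw hP).pathTrans (hpw hC)).pathTrans (hpw hQ))
    (by simpa only [Path.trans_range] using union_subset (union_subset hPΩ hCΩ) hQΩ)
  have hP_int := hintegrable hP hPΩ
  have hC_int := hintegrable hC hCΩ
  have hQ_int := hintegrable hQ hQΩ
  rw [curveIntegral_trans hP_int hQ_int] at hPQ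
  rw [curveIntegral_trans (hP_int.trans hC_int) hQ_int, curveIntegral_trans hP_int hC_int,
    curveIntegral_circlePath] at hPCQ
  exact hperiod (by linear_combination hPCQ - hPQ)

section Convolution

variable {a b c z s : ℂ}

lemma ofReal_mul_sub_ne_zero {t : ℝ} (ht : t ∈ Icc (0 : ℝ) 1) (hz : ‖z‖ < ‖c‖) :
    (t : ℂ) * z - c ≠ 0 := by
  refine sub_ne_zero.mpr fun h => hz.not_ge ?_
  rw [← h, norm_mul, Complex.norm_of_nonneg ht.1]
  exact mul_le_of_le_one_left (norm_nonneg z) ht.2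

lemma one_sub_div_mem_slitPlane (hz : ‖z‖ < ‖c‖) : 1 - z / c ∈ Complex.slitPlane := by
  rw [sub_eq_add_neg]
  refine Complex.mem_slitPlane_of_norm_lt_one ?_
  rwa [norm_neg, norm_div, div_lt_one ((norm_nonneg z).trans_lt hz)]

lemma hasDerivAt_log_one_sub_div (hz : ‖z‖ < ‖c‖) :
    HasDerivAt (fun z => Complex.log (1 - z / c)) (z - c)⁻¹ z := by
  have hc : c ≠ 0 := norm_pos_iff.mp ((norm_nonneg z).trans_lt hz)
  have hzc : z - c ≠ 0 := sub_ne_zero.mpr (ne_of_apply_ne norm hz.ne)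
  have hlin : HasDerivAt (fun z => 1 - z / c) (-(1 / c)) z :=
    ((hasDerivAt_id z).div_const c).const_sub 1
  convert hlin.clog (one_sub_div_mem_slitPlane hz) using 1
  rw [one_sub_div hc, ← neg_sub z c]
  field_simp

lemma log_one_sub_div_eq_integral (hz : ‖z‖ < ‖c‖) :
    Complex.log (1 - z / c) = z * ∫ t in (0 : ℝ)..1, ((t : ℂ) * z - c)⁻¹ := by
  have hc : c ≠ 0 := norm_pos_iff.mp ((norm_nonneg z).trans_lt hz)
  have hslit := one_sub_div_mem_slitPlane hz
  rw [sub_eq_add_neg] at hslit ⊢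
  rw [Complex.log_eq_integral hslit, ← integral_const_mul, ← integral_const_mul]
  refine integral_congr fun t ht => ?_
  rw [uIcc_of_le zero_le_one] at ht
  have : (t : ℂ) * z - c ≠ 0 := ofReal_mul_sub_ne_zero ht hz
  have hlin : 1 + t • -(z / c) = -((t : ℂ) * z - c) / c := by
    rw [Complex.real_smul]
    field_simp
    ring
  simp only [hlin, inv_div]
  field_simp

lemma sub_mul_conv_sub_inv (ha : ‖z‖ < ‖a‖) (hb : ‖z‖ < ‖b‖) :
    (z - (a + b)) * conv (fun ζ => (ζ - a)⁻¹) (fun ζ => (ζ - b)⁻¹) z =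
      Complex.log (1 - z / a) + Complex.log (1 - z / b) := by
  have hintegrable {c : ℂ} (hc : ‖z‖ < ‖c‖) :
      IntervalIntegrable (fun t : ℝ => ((t : ℂ) * z - c)⁻¹) MeasureTheory.volume 0 1 :=
    ContinuousOn.intervalIntegrable <| ContinuousOn.inv₀ (by fun_prop) fun t ht =>
      ofReal_mul_sub_ne_zero (uIcc_of_le (zero_le_one' ℝ) ▸ ht) hc
  have hintegrable_flip :
      IntervalIntegrable (fun t : ℝ => ((1 - t : ℂ) * z - b)⁻¹) MeasureTheory.volume 0 1 := by
    simpa using ((hintegrable hb).comp_sub_left 1).symm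
  have hflip : ∫ t in (0 : ℝ)..1, ((1 - t : ℂ) * z - b)⁻¹ =
      ∫ t in (0 : ℝ)..1, ((t : ℂ) * z - b)⁻¹ := by
    simpa using integral_comp_sub_left (a := 0) (b := 1) (fun t : ℝ => ((t : ℂ) * z - b)⁻¹) 1
  have hfractions (t : ℝ) (ht : t ∈ uIcc (0 : ℝ) 1) :
      (z - (a + b)) * (((t : ℂ) * z - a)⁻¹ * ((1 - t : ℂ) * z - b)⁻¹) =
        ((t : ℂ) * z - a)⁻¹ + ((1 - t : ℂ) * z - b)⁻¹ := by
    rw [uIcc_of_le zero_le_one] at ht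
    have hx := ofReal_mul_sub_ne_zero ht ha
    have hy := ofReal_mul_sub_ne_zero (Icc.mem_iff_one_sub_mem.mp ht) hb
    push_cast at hy
    rw [inv_add_inv hx hy, div_eq_mul_inv, mul_inv]
    ring
  rw [conv, mul_left_comm, ← integral_const_mul, integral_congr hfractions,
    integral_add (hintegrable ha) hintegrable_flip, hflip, mul_add,
    log_one_sub_div_eq_integral ha, log_one_sub_div_eq_integral hb]

lemma deriv_sub_mul_conv_sub_inv (ha : ‖s‖ < ‖a‖) (hb : ‖s‖ < ‖b‖) :
    deriv ((fun z => z - (a + b)) * conv (fun ζ => (ζ - a)⁻¹) (fun ζ => (ζ - b)⁻¹)) =ᶠ[𝓝 s]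
      fun z => (z - a)⁻¹ + (z - b)⁻¹ := by
  have hnear : ∀ᶠ z in 𝓝 s, ‖z‖ < ‖a‖ ∧ ‖z‖ < ‖b‖ :=
    (continuous_norm.tendsto s).eventually (Filter.Eventually.and (gt_mem_nhds ha) (gt_mem_nhds hb))
  have hlog : (fun z => z - (a + b)) * conv (fun ζ => (ζ - a)⁻¹) (fun ζ => (ζ - b)⁻¹) =ᶠ[𝓝 s]
      fun z => Complex.log (1 - z / a) + Complex.log (1 - z / b) :=
    hnear.mono fun z hz => sub_mul_conv_sub_inv hz.1 hz.2
  exact hlog.deriv.trans <| hnear.mono fun z hz =>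
    ((hasDerivAt_log_one_sub_div hz.1).add (hasDerivAt_log_one_sub_div hz.2)).deriv

end Convolution

section OmegaContinuability

variable {Ω : Set ℂ} {a b s : ℂ}

lemma exists_closedBall_diff_singleton_subset_compl {X : Type*} [PseudoMetricSpace X] {Ω : Set X}
    (hcl : IsClosed Ω) (hd : IsDiscrete Ω) (x : X) : ∃ R > 0, closedBall x R \ {x} ⊆ Ωᶜ :=
  (nhdsWithin_hasBasis nhds_basis_closedBall _).mem_iff.mp <|
    disjoint_principal_right.mp (isClosed_and_discrete_iff.mp ⟨hcl, hd⟩ x)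

lemma omegaCont_of_analyticOnNhd (hcl : IsClosed Ω) (hd : IsDiscrete Ω) {f : ℂ → ℂ}
    (hf : AnalyticOnNhd ℂ f (insert 0 Ωᶜ)) : OmegaCont Ω f := by
  obtain ⟨R, hR, hRΩ⟩ := exists_closedBall_diff_singleton_subset_compl hcl hd (0 : ℂ)
  have hball {z : ℂ} (hz : z ∈ ball 0 R) (hz0 : z ≠ 0) : z ∉ Ω :=
    hRΩ ⟨ball_subset_closedBall hz, hz0⟩
  refine ⟨R, hR, fun z hz => hf z ((eq_or_ne z 0).imp id (hball hz)), fun z => hball,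
    fun γ _ _ _ hγΩ => continuableAlong_iff_exists_analyticChain.mpr ?_⟩
  obtain ⟨r, hr⟩ := AnalyticChain.exists_const fun t ht => hf (γ t) (.inr (hγΩ t ht))
  exact ⟨_, r, hr, .rfl⟩

lemma omegaCont_sub_inv (hcl : IsClosed Ω) (hd : IsDiscrete Ω) (ha : a ∈ Ω) (ha0 : a ≠ 0) :
    OmegaCont Ω (fun ζ => (ζ - a)⁻¹) := by
  refine omegaCont_of_analyticOnNhd hcl hd fun z hz => (analyticAt_id.sub analyticAt_const).inv ?_
  refine sub_ne_zero.mpr ?_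
  rintro rfl
  exact hz.elim ha0 (· ha)

theorem exists_path_not_continuableAlong_conv (hcl : IsClosed Ω) (hd : IsDiscrete Ω) (ha : a ∈ Ω)
    (hb : b ∈ Ω) (hab : a + b ∉ Ω) (hs : s ∉ Ω) (hsa : ‖s‖ < ‖a‖) (hsb : ‖s‖ < ‖b‖) :
    ∃ γ : Path s (a + b), PiecewiseC1On γ.extend 0 1 ∧ range γ ⊆ Ωᶜ ∧
      ¬ ContinuableAlong (conv (fun ζ => (ζ - a)⁻¹) (fun ζ => (ζ - b)⁻¹)) γ.extend 0 1 := by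
  obtain ⟨R, hR, hRΩ⟩ := exists_closedBall_diff_singleton_subset_compl hcl hd a
  have hanalytic {c : ℂ} (hc : c ∈ Ω) : AnalyticOnNhd ℂ (fun z => (z - c)⁻¹) Ωᶜ := fun z hz =>
    (analyticAt_id.sub analyticAt_const).inv (sub_ne_zero.mpr (ne_of_mem_of_not_mem hc hz).symm)
  have hcount : Ω.Countable :=
    have := hd.to_subtype
    countable_coe_iff.mp countable_of_Lindelof_of_discrete
  have hb_far : b = a ∨ b ∉ closedBall a R :=
    or_iff_not_imp_left.mpr fun hba hmem => hRΩ ⟨hmem, hba⟩ hb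
  refine exists_path_not_continuableAlong (q := fun z => z - (a + b))
    (h := fun z => (z - a)⁻¹ + (z - b)⁻¹) hcount hs hab (by fun_prop) (sub_self _)
    ((hanalytic ha).add (hanalytic hb)) (deriv_sub_mul_conv_sub_inv hsa hsb) hR.le
    (fun z hz => hRΩ ⟨sphere_subset_closedBall hz, ?_⟩)
    (circleIntegral_sub_center_inv_add_sub_inv_ne_zero hR hb_far)
  exact ne_of_mem_sphere hz hR.ne'

theorem not_omegaCont_conv (hcl : IsClosed Ω) (hd : IsDiscrete Ω) (ha : a ∈ Ω) (hb : b ∈ Ω)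
    (ha0 : a ≠ 0) (hb0 : b ≠ 0) (hab : a + b ∉ Ω) :
    ¬ OmegaCont Ω (conv (fun ζ => (ζ - a)⁻¹) (fun ζ => (ζ - b)⁻¹)) := by
  rintro ⟨R, hR, -, hRΩ, hcont⟩
  have hnorm {ω : ℂ} (hω : ω ∈ Ω) (hω0 : ω ≠ 0) : R ≤ ‖ω‖ :=
    not_lt.mp fun h => hRΩ ω (mem_ball_zero_iff.mpr h) hω0 hω
  obtain ⟨s, hs_pos, hsR⟩ := NormedField.exists_norm_lt ℂ hR
  have hs0 : s ≠ 0 := norm_pos_iff.mp hs_pos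
  have hs_ball : s ∈ ball 0 R := mem_ball_zero_iff.mpr hsR
  obtain ⟨γ, hγ, hγΩ, hnot⟩ := exists_path_not_continuableAlong_conv hcl hd ha hb hab
    (hRΩ s hs_ball hs0) (hsR.trans_le (hnorm ha ha0)) (hsR.trans_le (hnorm hb hb0))
  exact hnot (hcont γ.extend hγ (by simpa using hs_ball) (by simpa using hs0)
    fun t _ => hγΩ (γ.extend_range ▸ mem_range_self t))

end OmegaContinuability

/-- The germs `1/(ζ-ω₁)` and `1/(ζ-ω₂)` are `{ω₁,ω₂}`-continuable but their
convolution is not: there is a path from `0` to `ω₁+ω₂` avoiding `ω₁, ω₂` along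
which the convolution admits no analytic continuation.  Consequently, if a
non-empty closed discrete `Ω` is not stable under addition, then the space of
`Ω`-continuable germs is not stable under convolution. -/
theorem stmt1 (ω₁ ω₂ : ℂ) (h₁ : ω₁ ≠ 0) (h₂ : ω₂ ≠ 0) :
    OmegaCont {ω₁, ω₂} (fun ζ => (ζ - ω₁)⁻¹) ∧
    OmegaCont {ω₁, ω₂} (fun ζ => (ζ - ω₂)⁻¹) ∧
    ¬ OmegaCont {ω₁, ω₂} (conv (fun ζ => (ζ - ω₁)⁻¹) (fun ζ => (ζ - ω₂)⁻¹)) ∧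
    (∃ γ : ℝ → ℂ, PiecewiseC1On γ 0 1 ∧ γ 0 = 0 ∧ γ 1 = ω₁ + ω₂ ∧
      (∀ t ∈ Set.Icc (0:ℝ) 1, γ t ≠ ω₁ ∧ γ t ≠ ω₂) ∧
      ¬ ContinuableAlong (conv (fun ζ => (ζ - ω₁)⁻¹) (fun ζ => (ζ - ω₂)⁻¹)) γ 0 1) ∧
    (∀ Ω : Set ℂ, Ω.Nonempty → IsClosed Ω → DiscreteTopology Ω →
      (¬ ∀ a ∈ Ω, ∀ b ∈ Ω, a + b ∈ Ω) →
      ¬ ∀ f g : ℂ → ℂ, OmegaCont Ω f → OmegaCont Ω g → OmegaCont Ω (conv f g)) := by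
  have hfin : ({ω₁, ω₂} : Set ℂ).Finite := toFinite _
  have hcl := hfin.isClosed
  have hd := hfin.isDiscrete
  have hsum : ω₁ + ω₂ ∉ ({ω₁, ω₂} : Set ℂ) := by simp [h₁, h₂]
  refine ⟨omegaCont_sub_inv hcl hd (by simp) h₁, omegaCont_sub_inv hcl hd (by simp) h₂,
    not_omegaCont_conv hcl hd (by simp) (by simp) h₁ h₂ hsum, ?_, ?_⟩
  · obtain ⟨γ, hγ, hγΩ, hnot⟩ := exists_path_not_continuableAlong_conv hcl hd (mem_insert ω₁ {ω₂})
      (by simp) hsum (s := 0) (by simp [h₁.symm, h₂.symm]) (by simpa) (by simpa)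
    exact ⟨γ.extend, hγ, γ.extend_zero, γ.extend_one,
      fun t _ => by simpa using hγΩ (γ.extend_range ▸ mem_range_self t), hnot⟩
  · intro Ω _ hcl _ hadd hconv
    have hd : IsDiscrete Ω := ⟨‹_›⟩
    push Not at hadd
    obtain ⟨a, ha, b, hb, hab⟩ := hadd
    have ha0 : a ≠ 0 := fun h => hab (by simpa [h] using hb)
    have hb0 : b ≠ 0 := fun h => hab (by simpa [h] using ha)
    exact not_omegaCont_conv hcl hd ha hb ha0 hb0 hab
      (hconv _ _ (omegaCont_sub_inv hcl hd ha ha0) (omegaCont_sub_inv hcl hd hb hb0))
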